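/- Let (q_j)_{j≥1} be an enumeration of the points of ℝ² with rational coordinates, let E := ⋃_{j≥1} B(q_j, 2^{-j}), let f := χ_E, and let O_E := { x ∈ ℝ² : lim_{r→0} L²(B(x,r) ∩ E)/L²(B(x,r)) = 0 }. Then f^∨(x) = 0 for every x ∈ O_E, while f^∨(y) = 1 for every y ∈ B(q_j, 2^{-j}) and every j ≥ 1; consequently, f^∨ is not upper semicontinuous at any point of O_E. -/

import Mathlib

/-!
Write `O_E` for the measure-theoretic exterior of `E`. By definition `u^∨(x)` is the infimum of the
`t` such that `x` lies in the exterior of the superlevel set `{t < u}`. For `u = χ_E` these sets are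
the whole plane, `E`, or empty according as `t < 0`, `0 ≤ t < 1` or `1 ≤ t`, so `f^∨` is the
characteristic function of the complement of `O_E`. That complement contains the interior of `E`;
when the latter is dense, every point of `O_E` is a limit of points where `f^∨ = 1`.
-/

open MeasureTheory Metric Filter Topology
open scoped ENNReal

/-- The upper approximate limit `u^∨(x)` with respect to Lebesgue measure on `ℝ²`,
valued in the extended reals (with the convention `inf ∅ = +∞`). -/
noncomputable def upperApproxLimit
    (u : EuclideanSpace ℝ (Fin 2) → ℝ) (x : EuclideanSpace ℝ (Fin 2)) : EReal :=
  sInf ((fun t : ℝ => (t : EReal)) ''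
    {t : ℝ | Tendsto
      (fun r : ℝ => volume {y | y ∈ ball x r ∧ t < u y} / volume (ball x r))
      (𝓝[>] (0 : ℝ)) (𝓝 0)})

/-- The measure-theoretic exterior `O_E` of `E`: the points at which `E` has density `0` with
respect to `μ`, with densities computed along open balls centred at the point. -/
def measureTheoreticExterior {X : Type*} [PseudoMetricSpace X] [MeasurableSpace X]
    (μ : Measure X) (E : Set X) : Set X :=
  {x | Tendsto (fun r : ℝ => μ (ball x r ∩ E) / μ (ball x r)) (𝓝[>] (0 : ℝ)) (𝓝 0)}

section MeasureTheoreticExterior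

variable {X : Type*} [PseudoMetricSpace X] [MeasurableSpace X] {μ : Measure X}
  {E F : Set X} {x : X}

theorem measureTheoreticExterior_anti (h : E ⊆ F) :
    measureTheoreticExterior μ F ⊆ measureTheoreticExterior μ E := fun _ hx =>
  tendsto_of_tendsto_of_tendsto_of_le_of_le tendsto_const_nhds hx (fun _ => zero_le)
    fun _ => by dsimp only; gcongr

theorem measureTheoreticExterior_empty : measureTheoreticExterior μ (∅ : Set X) = Set.univ :=
  Set.eq_univ_of_forall fun x => by simp [measureTheoreticExterior]

variable [μ.IsOpenPosMeasure] [IsLocallyFiniteMeasure μ]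

theorem tendsto_measure_ball_inter_div_of_mem_interior (hx : x ∈ interior E) :
    Tendsto (fun r : ℝ => μ (ball x r ∩ E) / μ (ball x r)) (𝓝[>] (0 : ℝ)) (𝓝 1) := by
  obtain ⟨s, hs, hμs⟩ := μ.finiteAt_nhds x
  obtain ⟨ε, hε, hball⟩ := Metric.mem_nhds_iff.1 (inter_mem (mem_interior_iff_mem_nhds.1 hx) hs)
  refine tendsto_const_nhds.congr' ?_
  filter_upwards [Ioo_mem_nhdsGT hε] with r ⟨hr, hrε⟩
  have hsub : ball x r ⊆ E ∩ s := (ball_subset_ball hrε.le).trans hball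
  have hfin : μ (ball x r) ≠ ∞ :=
    ((measure_mono (hsub.trans Set.inter_subset_right)).trans_lt hμs).ne
  rw [Set.inter_eq_left.2 (hsub.trans Set.inter_subset_left),
    ENNReal.div_self (measure_ball_pos μ x hr).ne' hfin]

theorem disjoint_interior_measureTheoreticExterior :
    Disjoint (interior E) (measureTheoreticExterior μ E) :=
  Set.disjoint_left.2 fun _ hint hext => one_ne_zero <|
    tendsto_nhds_unique (tendsto_measure_ball_inter_div_of_mem_interior hint) hext

theorem measureTheoreticExterior_univ : measureTheoreticExterior μ (Set.univ : Set X) = ∅ := by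
  simpa only [interior_univ, Set.univ_disjoint] using
    disjoint_interior_measureTheoreticExterior (μ := μ) (E := Set.univ)

end MeasureTheoreticExterior

section UpperApproxLimit

variable {E : Set (EuclideanSpace ℝ (Fin 2))} {x : EuclideanSpace ℝ (Fin 2)}

theorem upperApproxLimit_eq_of_isLeast {u : EuclideanSpace ℝ (Fin 2) → ℝ} {a : ℝ}
    (h : IsLeast {t : ℝ | x ∈ measureTheoreticExterior volume {y | t < u y}} a) :
    upperApproxLimit u x = a :=
  (EReal.coe_strictMono.monotone.map_isLeast h).csInf_eq

theorem upperApproxLimit_indicator_one_of_mem (hx : x ∈ measureTheoreticExterior volume E) :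
    upperApproxLimit (E.indicator 1) x = 0 := by
  rw [← EReal.coe_zero]
  refine upperApproxLimit_eq_of_isLeast ⟨?_, fun t ht => not_lt.1 fun ht0 => ?_⟩
  · have hsub : {y | (0 : ℝ) < E.indicator 1 y} ⊆ E :=
      fun _ (hy : (0 : ℝ) < _) => Set.mem_of_indicator_ne_zero hy.ne'
    exact measureTheoreticExterior_anti hsub hx
  · have huniv : {y | t < E.indicator 1 y} = Set.univ := Set.eq_univ_of_forall fun y =>
      ht0.trans_le (Set.indicator_nonneg (fun _ _ => zero_le_one) y)
    rw [Set.mem_ofPred_eq, huniv, measureTheoreticExterior_univ] at ht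
    exact ht

theorem upperApproxLimit_indicator_one_of_notMem (hx : x ∉ measureTheoreticExterior volume E) :
    upperApproxLimit (E.indicator 1) x = 1 := by
  rw [← EReal.coe_one]
  refine upperApproxLimit_eq_of_isLeast ⟨?_, fun t ht => not_lt.1 fun ht1 => hx ?_⟩
  · have hempty : {y | (1 : ℝ) < E.indicator 1 y} = ∅ :=
      Set.eq_empty_of_forall_notMem fun y (hy : (1 : ℝ) < _) =>
        hy.not_ge (Set.indicator_apply_le' (fun _ => le_rfl) fun _ => zero_le_one)
    rw [Set.mem_ofPred_eq, hempty, measureTheoreticExterior_empty]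
    exact Set.mem_univ x
  · have hsub : E ⊆ {y | t < E.indicator 1 y} := fun y hy => by
      rwa [Set.mem_ofPred_eq, Set.indicator_of_mem hy]
    exact measureTheoreticExterior_anti hsub ht

end UpperApproxLimit

theorem not_upperSemicontinuousAt_of_mem_closure {X β : Type*} [TopologicalSpace X] [Preorder β]
    {g : X → β} {x : X} {c : β} (hgx : g x < c) (hx : x ∈ closure {y | c ≤ g y}) :
    ¬ UpperSemicontinuousAt g x := fun husc =>
  mem_closure_iff_frequently.1 hx ((husc c hgx).mono fun _ => not_le_of_gt)

theorem dense_setOf_forall_exists_rat {ι : Type*} (p : ℝ≥0∞) :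
    Dense {x : PiLp p (fun _ : ι => ℝ) | ∀ i, ∃ a : ℚ, x i = a} := by
  have hpi : DenseRange (Pi.map fun (_ : ι) (a : ℚ) => (a : ℝ)) :=
    DenseRange.piMap fun _ => Rat.denseRange_cast
  refine ((WithLp.toLp_surjective p).denseRange.comp hpi (PiLp.continuous_toLp p _)).mono ?_
  rintro _ ⟨a, rfl⟩ i
  exact ⟨a i, rfl⟩

theorem dense_interior_iUnion_ball {X ι : Type*} [PseudoMetricSpace X] {q : ι → X}
    (hq : DenseRange q) {ρ : ι → ℝ} (hρ : ∀ j, 0 < ρ j) :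
    Dense (interior (⋃ j, ball (q j) (ρ j))) := by
  refine Dense.mono ?_ hq
  rintro _ ⟨j, rfl⟩
  exact interior_maximal (Set.subset_iUnion _ j) isOpen_ball (mem_ball_self (hρ j))

theorem upperApproxLimit_not_upperSemicontinuous_general {E : Set (EuclideanSpace ℝ (Fin 2))}
    (hE : Dense (interior E)) :
    (∀ x ∈ measureTheoreticExterior volume E, upperApproxLimit (E.indicator 1) x = 0) ∧
    (∀ y ∈ interior E, upperApproxLimit (E.indicator 1) y = 1) ∧
    (∀ x ∈ measureTheoreticExterior volume E,
      ¬ UpperSemicontinuousAt (upperApproxLimit (E.indicator 1)) x) := by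
  have hext : ∀ x ∈ measureTheoreticExterior volume E, upperApproxLimit (E.indicator 1) x = 0 :=
    fun _ => upperApproxLimit_indicator_one_of_mem
  have hint : ∀ y ∈ interior E, upperApproxLimit (E.indicator 1) y = 1 := fun _ hy =>
    upperApproxLimit_indicator_one_of_notMem
      (disjoint_interior_measureTheoreticExterior.notMem_of_mem_left hy)
  refine ⟨hext, hint, fun x hx => not_upperSemicontinuousAt_of_mem_closure (c := 1) ?_ ?_⟩
  · exact (hext x hx).trans_lt zero_lt_one
  · exact closure_mono (fun y hy => (hint y hy).ge) (hE x)

/-- Let `(q_j)_{j ≥ 1}` be an enumeration of the points of `ℝ²` with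
rational coordinates (here indexed by `j : ℕ`, with `q j` playing the role of `q_{j+1}`
and radius `2^{-(j+1)}`), let `E = ⋃_j B(q_j, 2^{-j})`, `f = χ_E`, and let `O_E` be the
measure-theoretic exterior of `E`. Then `f^∨ = 0` on `O_E` while `f^∨ = 1` on each ball
`B(q_j, 2^{-j})`; consequently, `f^∨` is not upper semicontinuous at any point of
`O_E`. -/
theorem upperApproxLimit_not_upperSemicontinuous
    (q : ℕ → EuclideanSpace ℝ (Fin 2))
    (hq_inj : Function.Injective q)
    (hq_range : Set.range q =
      {x : EuclideanSpace ℝ (Fin 2) | ∀ i, ∃ p : ℚ, x i = (p : ℝ)})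
    (E : Set (EuclideanSpace ℝ (Fin 2)))
    (hE : E = ⋃ j : ℕ, ball (q j) ((2 : ℝ) ^ (-(j : ℤ) - 1)))
    (f : EuclideanSpace ℝ (Fin 2) → ℝ) (hf : f = E.indicator 1)
    (OE : Set (EuclideanSpace ℝ (Fin 2)))
    (hOE : OE = {x : EuclideanSpace ℝ (Fin 2) |
      Tendsto (fun r : ℝ => volume (ball x r ∩ E) / volume (ball x r))
        (𝓝[>] (0 : ℝ)) (𝓝 0)}) :
    (∀ x ∈ OE, upperApproxLimit f x = (0 : EReal)) ∧
    (∀ j : ℕ, ∀ y ∈ ball (q j) ((2 : ℝ) ^ (-(j : ℤ) - 1)),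
      upperApproxLimit f y = (1 : EReal)) ∧
    (∀ x ∈ OE, ¬ UpperSemicontinuousAt (upperApproxLimit f) x) := by
  subst hE hf hOE
  have hq : DenseRange q := by
    rw [DenseRange, hq_range]
    exact dense_setOf_forall_exists_rat 2
  obtain ⟨hext, hint, husc⟩ := upperApproxLimit_not_upperSemicontinuous_general <|
    dense_interior_iUnion_ball hq fun j : ℕ => (by positivity : (0 : ℝ) < 2 ^ (-(j : ℤ) - 1))
  exact ⟨hext, fun j y hy => hint y (interior_maximal (Set.subset_iUnion _ j) isOpen_ball hy), husc⟩
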